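/- (Conway's formula, two players) For m = 2, the winning probabilities satisfy p_{A_1} · ( (A_1 ∗ A_1) − (A_1 ∗ A_2) ) = p_{A_2} · ( (A_2 ∗ A_2) − (A_2 ∗ A_1) ); i.e., the odds of the first player against the second are p_{A_1}/p_{A_2} = ((A_2 ∗ A_2) − (A_2 ∗ A_1)) / ((A_1 ∗ A_1) − (A_1 ∗ A_2)). -/

import Mathlib

/-!
Fix patterns `A`, `B`, neither of which contains the other, and let `τ` be the first time at which
one of them has occurred. The proof evaluates, for a target pattern `A` and a time `n`, the
probability that no pattern has occurred up to time `n` and that the tosses after time `n` spell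
`A`. By independence this is `P(τ > n) P(A)`. On this event, the game ends at time `n + k` for
exactly one `1 ≤ k ≤ |A|`, and with exactly one winner `C`; the first `k` letters of `A` are then
the last `k` letters of `C` (the case `k > |C|` would put `C` inside `A`). By independence again,
`P(τ > n) P(A) = Σ_C Σ_k [A_(k) = C^(k)] P(C wins at time n + k) P(A) / P(A_(k))`, so

`P(τ > n) = Σ_C Σ_k [A_(k) = C^(k)] / P(A_(k)) ⬝ P(C wins at time n + k)`.

Since `C` cannot win before time `|C| ≥ k`, summing the right-hand side over `n` gives
`Σ_C p_C (C ∗ A)`, a finite number which is thus the same for the target `A` and the target `B`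
(it is the expectation of `τ`). The equality
`p_A (A ∗ A) + p_B (B ∗ A) = p_B (B ∗ B) + p_A (A ∗ B)` is the assertion. No separate argument
for `τ < ∞` is needed, as the series on the right-hand side converges in any case.
-/


open MeasureTheory ENNReal

noncomputable section

/-- Probability of a single toss outcome: `true` (heads) has probability `p`,
`false` (tails) has probability `1 - p`. -/
def letterP (p : ℝ) (b : Bool) : ℝ := if b then p else 1 - p

/-- Probability of a finite string of tosses (`1` for the empty string). -/
def strP (p : ℝ) (A : List Bool) : ℝ := (A.map (letterP p)).prod

/-- `μ` is the product measure on `{H,T}^ℕ` of i.i.d. coin tosses with heads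
probability `p`: every cylinder set has the product probability. -/
def IsCoinMeasure (p : ℝ) (μ : Measure (ℕ → Bool)) : Prop :=
  ∀ (n : ℕ) (a : Fin n → Bool),
    μ {ξ | ∀ i : Fin n, ξ i = a i} = ENNReal.ofReal (∏ i, letterP p (a i))

/-- The pattern `A` (of length `l`) occurs ending exactly at toss `n`
(toss number `k ≥ 1` of `ξ` is `ξ (k - 1)`): `n ≥ l` and tosses
`n - l + 1, …, n` spell `A`. -/
def occursAt (A : List Bool) (ξ : ℕ → Bool) (n : ℕ) : Prop :=
  A.length ≤ n ∧ (List.ofFn fun k : Fin A.length => ξ (n - A.length + k)) = A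

/-- The first toss at which the pattern `A` has occurred (`⊤` if it never occurs). -/
def hitTime (A : List Bool) (ξ : ℕ → Bool) : ℕ∞ :=
  ⨅ (n : ℕ) (_ : occursAt A ξ n), (n : ℕ∞)

/-- The Conway number `B ∗ A = Σ_{k=1}^{min(|A|,|B|)} [A_(k) = B^(k)] / P(A_(k))`,
where `A_(k)` is the prefix of length `k` of `A` and `B^(k)` is the suffix of
length `k` of `B`. -/
def conway (p : ℝ) (B A : List Bool) : ℝ :=
  ∑ k ∈ Finset.Icc 1 (min A.length B.length),
    (if A.take k = B.drop (B.length - k) then (1 : ℝ) else 0) / strP p (A.take k)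

/-- The event that the tosses following the first `n` ones spell the word `w`. -/
def spellsAfter (w : List Bool) (n : ℕ) : Set (ℕ → Bool) :=
  {ξ | ∀ (k : ℕ) (h : k < w.length), ξ (n + k) = w[k]}

/-- The event `E` depends on the first `n` tosses only. -/
def DeterminedBy (n : ℕ) (E : Set (ℕ → Bool)) : Prop :=
  ∀ ξ ξ' : ℕ → Bool, (∀ i < n, ξ i = ξ' i) → ξ ∈ E → ξ' ∈ E

/-- The event that neither `A` nor `B` has occurred up to time `n` (inclusive). -/
def noneUpTo (A B : List Bool) (n : ℕ) : Set (ℕ → Bool) :=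
  {ξ | ∀ s ≤ n, ¬ occursAt A ξ s ∧ ¬ occursAt B ξ s}

/-- The event that `C` occurs at time `t`, with neither `A` nor `B` occurring before. For `C = A`
or `C = B` this says that `C` wins at time `t`. -/
def winsAt (A B C : List Bool) (t : ℕ) : Set (ℕ → Bool) :=
  {ξ | occursAt C ξ t ∧ ∀ s < t, ¬ occursAt A ξ s ∧ ¬ occursAt B ξ s}

/-! ### Independence of the past and the next tosses -/

lemma strP_append (p : ℝ) (v w : List Bool) : strP p (v ++ w) = strP p v * strP p w := by
  simp [strP]

lemma strP_pos {p : ℝ} (hp0 : 0 < p) (hp1 : p < 1) (w : List Bool) : 0 < strP p w := by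
  unfold strP
  apply List.prod_pos
  intro a ha
  obtain ⟨b, -, rfl⟩ := List.mem_map.1 ha
  cases b <;> simp [letterP] <;> linarith

lemma letterP_nonneg {p : ℝ} (hp0 : 0 < p) (hp1 : p < 1) (b : Bool) : 0 ≤ letterP p b := by
  cases b <;> simp [letterP] <;> linarith

lemma DeterminedBy.mono {n m : ℕ} {E : Set (ℕ → Bool)} (h : DeterminedBy n E) (hnm : n ≤ m) :
    DeterminedBy m E :=
  fun ξ ξ' hξ => h ξ ξ' fun i hi => hξ i (by omega)

lemma measurable_restr (n : ℕ) :
    Measurable (fun (ξ : ℕ → Bool) (i : Fin n) => ξ i) :=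
  measurable_pi_lambda _ fun _ => measurable_pi_apply _

lemma DeterminedBy.exists_preimage {n : ℕ} {E : Set (ℕ → Bool)} (h : DeterminedBy n E) :
    ∃ S : Finset (Fin n → Bool), E = (fun (ξ : ℕ → Bool) (i : Fin n) => ξ i) ⁻¹' S := by
  classical
  refine ⟨(Set.toFinite ((fun (ξ : ℕ → Bool) (i : Fin n) => ξ i) '' E)).toFinset, ?_⟩
  ext ξ
  simp only [Set.Finite.coe_toFinset, Set.mem_preimage, Set.mem_image]
  constructor
  · exact fun hξ => ⟨ξ, hξ, rfl⟩
  · rintro ⟨ξ', hξ', he⟩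
    exact h ξ' ξ (fun i hi => congrFun he ⟨i, hi⟩) hξ'

lemma DeterminedBy.measurableSet {n : ℕ} {E : Set (ℕ → Bool)} (h : DeterminedBy n E) :
    MeasurableSet E := by
  obtain ⟨S, rfl⟩ := h.exists_preimage
  exact measurable_restr n S.measurableSet

lemma measureReal_inter_letter {p : ℝ} (hp0 : 0 < p) (hp1 : p < 1)
    {μ : Measure (ℕ → Bool)} [IsProbabilityMeasure μ] (hμ : IsCoinMeasure p μ)
    {n : ℕ} {E : Set (ℕ → Bool)} (h : DeterminedBy n E) (b : Bool) :
    μ.real (E ∩ {ξ | ξ n = b}) = μ.real E * letterP p b := by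
  obtain ⟨S, rfl⟩ := h.exists_preimage
  set f := fun (ξ : ℕ → Bool) (i : Fin n) => ξ i with hf
  have hb : MeasurableSet {ξ : ℕ → Bool | ξ n = b} :=
    (measurable_pi_apply (X := fun _ : ℕ => Bool) n) (measurableSet_singleton b)
  have hm : ∀ a ∈ S, MeasurableSet (f ⁻¹' {a}) :=
    fun a _ => measurable_restr n (measurableSet_singleton a)
  have e1 := sum_measure_preimage_singleton (μ := μ) S hm
  have e2 := sum_measure_preimage_singleton (μ := μ.restrict {ξ | ξ n = b}) S hm
  have hcyl : ∀ a ∈ S, μ.restrict {ξ | ξ n = b} (f ⁻¹' {a})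
      = μ (f ⁻¹' {a}) * ENNReal.ofReal (letterP p b) := by
    intro a ha
    rw [Measure.restrict_apply (hm a ha)]
    have h1 : f ⁻¹' {a} = {ξ | ∀ i : Fin n, ξ i = a i} := by
      ext ξ; simp [hf, funext_iff]
    have h2 : f ⁻¹' {a} ∩ {ξ | ξ n = b}
        = {ξ | ∀ i : Fin (n + 1), ξ i = (Fin.snoc a b : Fin (n + 1) → Bool) i} := by
      ext ξ; simp [h1, Fin.forall_fin_succ']
    rw [h2, hμ, h1, hμ, Fin.prod_univ_castSucc, ← ENNReal.ofReal_mul]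
    · simp
    · exact Finset.prod_nonneg fun i _ => letterP_nonneg hp0 hp1 _
  rw [Finset.sum_congr rfl hcyl, ← Finset.sum_mul, e1, Measure.restrict_apply' hb] at e2
  rw [measureReal_def, ← e2, ENNReal.toReal_mul,
    ENNReal.toReal_ofReal (letterP_nonneg hp0 hp1 b), measureReal_def]

lemma spellsAfter_cons (b : Bool) (w : List Bool) (n : ℕ) :
    spellsAfter (b :: w) n = {ξ | ξ n = b} ∩ spellsAfter w (n + 1) := by
  ext ξ
  simp only [spellsAfter, Set.mem_ofPred_eq, Set.mem_inter_iff]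
  constructor
  · intro h
    refine ⟨h 0 (by simp), fun k hk => ?_⟩
    have := h (k + 1) (by simpa using hk)
    simpa [add_assoc, add_comm 1] using this
  · rintro ⟨h0, h⟩ k hk
    cases k with
    | zero => simpa using h0
    | succ k =>
      have := h k (by simpa using hk)
      simpa [add_assoc, add_comm 1] using this

/-- An event depending on the first `n` tosses is independent of the event that the tosses after
time `n` spell a given word. -/
lemma measureReal_inter_spellsAfter {p : ℝ} (hp0 : 0 < p) (hp1 : p < 1)
    {μ : Measure (ℕ → Bool)} [IsProbabilityMeasure μ] (hμ : IsCoinMeasure p μ)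
    (w : List Bool) {n : ℕ} {E : Set (ℕ → Bool)} (h : DeterminedBy n E) :
    μ.real (E ∩ spellsAfter w n) = μ.real E * strP p w := by
  induction w generalizing n E with
  | nil => simp [spellsAfter, strP]
  | cons b w ih =>
    have hd : DeterminedBy (n + 1) (E ∩ {ξ | ξ n = b}) := by
      intro ξ ξ' hξ hm
      refine ⟨h ξ ξ' (fun i hi => hξ i (by omega)) hm.1, ?_⟩
      have := hm.2
      simp only [Set.mem_ofPred_eq] at this ⊢
      rw [← hξ n (by omega), this]
    rw [spellsAfter_cons, ← Set.inter_assoc, ih hd, measureReal_inter_letter hp0 hp1 hμ h]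
    simp [strP, mul_assoc]

/-! ### Combinatorics of occurrences -/

lemma occursAt_iff (A : List Bool) (ξ : ℕ → Bool) (n : ℕ) :
    occursAt A ξ n ↔ A.length ≤ n ∧ ξ ∈ spellsAfter A (n - A.length) := by
  unfold occursAt spellsAfter
  refine and_congr_right fun _ => ?_
  constructor
  · intro h k hk
    have := List.getElem_of_eq h (i := k) (by simpa using hk)
    simpa using this
  · intro h
    apply List.ext_getElem (by simp)
    intro k h1 h2
    simpa using h k h2

lemma occursAt_congr {A : List Bool} {ξ ξ' : ℕ → Bool} {n : ℕ} (h : ∀ i < n, ξ i = ξ' i) :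
    occursAt A ξ n ↔ occursAt A ξ' n := by
  unfold occursAt
  refine and_congr_right fun hn => ?_
  have : (fun k : Fin A.length => ξ (n - A.length + k))
      = fun k : Fin A.length => ξ' (n - A.length + k) := by
    funext k
    exact h _ (by have := k.2; omega)
  rw [this]

lemma determinedBy_noneUpTo (A B : List Bool) (n : ℕ) : DeterminedBy n (noneUpTo A B n) := by
  intro ξ ξ' h hm s hs
  have hc : ∀ i < s, ξ i = ξ' i := fun i hi => h i (by omega)
  rw [← occursAt_congr hc, ← occursAt_congr hc]
  exact hm s hs

lemma determinedBy_winsAt (A B C : List Bool) (t : ℕ) : DeterminedBy t (winsAt A B C t) := by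
  intro ξ ξ' h hm
  refine ⟨(occursAt_congr h).1 hm.1, fun s hs => ?_⟩
  have hc : ∀ i < s, ξ i = ξ' i := fun i hi => h i (by omega)
  rw [← occursAt_congr hc, ← occursAt_congr hc]
  exact hm.2 s hs

/-- If an occurrence of `C` lies within a stretch of tosses spelling `A`, then `C` is a contiguous
substring of `A`. -/
lemma infix_of_occursAt {A C : List Bool} {ξ : ℕ → Bool} {n t : ℕ} (hC : occursAt C ξ t)
    (hA : ξ ∈ spellsAfter A n) (h1 : n + C.length ≤ t) (h2 : t ≤ n + A.length) : C <:+: A := by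
  obtain ⟨hl, hs⟩ := (occursAt_iff _ _ _).1 hC
  have : C = (A.drop (t - C.length - n)).take C.length := by
    apply List.ext_getElem
    · simp; omega
    · intro k hk hk'
      have e1 := hs k hk
      have e2 := hA (t - C.length - n + k) (by omega)
      rw [show n + (t - C.length - n + k) = t - C.length + k by omega] at e2
      simp only [List.getElem_take, List.getElem_drop]
      rw [← e1, ← e2]
  rw [this]
  exact (List.take_prefix _ _).isInfix.trans (List.drop_suffix _ _).isInfix

lemma occursAt_of_spellsAfter {A : List Bool} {ξ : ℕ → Bool} {n : ℕ}
    (hA : ξ ∈ spellsAfter A n) : occursAt A ξ (n + A.length) :=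
  (occursAt_iff _ _ _).2 ⟨by omega, by simpa using hA⟩

lemma not_occursAt_both {A B : List Bool} (hAB : ¬ A <:+: B) (hBA : ¬ B <:+: A) {ξ : ℕ → Bool}
    {t : ℕ} (hA : occursAt A ξ t) (hB : occursAt B ξ t) : False := by
  have hA' := (occursAt_iff _ _ _).1 hA
  have hB' := (occursAt_iff _ _ _).1 hB
  rcases le_total A.length B.length with h | h
  · exact hAB (infix_of_occursAt hA hB'.2 (by omega) (by omega))
  · exact hBA (infix_of_occursAt hB hA'.2 (by omega) (by omega))

/-- If `C` wins (the competing patterns being `D` and `B`) at time `n + k`, where `k ≤ |C|`, and the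
tosses after time `n` spell `A`, then the last `k` letters of `C` are the first `k` letters of `A`;
conversely, under this overlap condition only the tosses after time `n + k` remain to be
prescribed. -/
lemma winsAt_inter_spellsAfter (A B C D : List Bool) {n k : ℕ} (hkA : k ≤ A.length)
    (hkC : k ≤ C.length) :
    winsAt D B C (n + k) ∩ spellsAfter A n =
      if A.take k = C.drop (C.length - k) then
        winsAt D B C (n + k) ∩ spellsAfter (A.drop k) (n + k) else ∅ := by
  split_ifs with h
  · ext ξ
    refine and_congr_right fun hw => ?_
    obtain ⟨hl, hs⟩ := (occursAt_iff _ _ _).1 hw.1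
    constructor
    · intro hA i hi
      have := hA (k + i) (by simp at hi; omega)
      simpa [add_assoc] using this
    · intro hA i hi
      by_cases hik : i < k
      · have e1 := hs (C.length - k + i) (by omega)
        have e2 := List.getElem_of_eq h (i := i) (by simp; omega)
        simp only [List.getElem_take, List.getElem_drop] at e2
        rw [e2, ← e1]
        congr 1; omega
      · have := hA (i - k) (by simp; omega)
        simp only [List.getElem_drop] at this
        convert this using 2 <;> omega
  · rw [Set.eq_empty_iff_forall_notMem]
    rintro ξ ⟨hw, hA⟩
    obtain ⟨hl, hs⟩ := (occursAt_iff _ _ _).1 hw.1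
    apply h
    apply List.ext_getElem
    · simp; omega
    · intro i hi hi'
      simp only [List.getElem_take, List.getElem_drop]
      simp at hi
      rw [← hA i (by omega), ← hs (C.length - k + i) (by omega)]
      congr 1; omega

/-- The probability that `C` wins at time `n + k` and the tosses after time `n` spell `A`. -/
lemma measureReal_winsAt_inter {p : ℝ} (hp0 : 0 < p) (hp1 : p < 1)
    {μ : Measure (ℕ → Bool)} [IsProbabilityMeasure μ] (hμ : IsCoinMeasure p μ)
    (A B C D : List Bool) {n k : ℕ} (hkA : k ≤ A.length) (hkC : k ≤ C.length) :
    μ.real (winsAt D B C (n + k) ∩ spellsAfter A n) =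
      (if A.take k = C.drop (C.length - k) then (1 : ℝ) else 0) / strP p (A.take k)
        * μ.real (winsAt D B C (n + k)) * strP p A := by
  rw [winsAt_inter_spellsAfter A B C D hkA hkC]
  split_ifs with h
  · rw [measureReal_inter_spellsAfter hp0 hp1 hμ _ (determinedBy_winsAt D B C (n + k))]
    have e : strP p A = strP p (A.take k) * strP p (A.drop k) := by
      rw [← strP_append, List.take_append_drop]
    have := (strP_pos hp0 hp1 (A.take k)).ne'
    rw [e]
    field_simp
  · simp

/-- When `C` is no proper contiguous substring of `A`, `C` cannot win more than `|C|` tosses into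
an appearance of `A`, so that the sum over `k` may be cut off at `|C|`. -/
lemma sum_measureReal_winsAt_inter {p : ℝ} (hp0 : 0 < p) (hp1 : p < 1)
    {μ : Measure (ℕ → Bool)} [IsProbabilityMeasure μ] (hμ : IsCoinMeasure p μ)
    (A B C D : List Bool) (hCA : C <:+: A → C = A) (n : ℕ) :
    ∑ k ∈ Finset.Icc 1 A.length, μ.real (winsAt D B C (n + k) ∩ spellsAfter A n) =
      (∑ k ∈ Finset.Icc 1 (min A.length C.length),
        (if A.take k = C.drop (C.length - k) then (1 : ℝ) else 0) / strP p (A.take k)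
          * μ.real (winsAt D B C (n + k))) * strP p A := by
  rw [Finset.sum_mul]
  symm
  calc _ = ∑ k ∈ Finset.Icc 1 (min A.length C.length),
        μ.real (winsAt D B C (n + k) ∩ spellsAfter A n) := by
        refine Finset.sum_congr rfl fun k hk => ?_
        simp only [Finset.mem_Icc, le_min_iff] at hk
        rw [measureReal_winsAt_inter hp0 hp1 hμ A B C D hk.2.1 hk.2.2]
    _ = _ := by
        refine Finset.sum_subset (Finset.Icc_subset_Icc_right (min_le_left _ _)) ?_
        intro k hk hk'
        simp only [Finset.mem_Icc, le_min_iff] at hk hk'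
        have he : winsAt D B C (n + k) ∩ spellsAfter A n = ∅ := by
          rw [Set.eq_empty_iff_forall_notMem]
          rintro ξ ⟨hw, hA⟩
          have := hCA (infix_of_occursAt hw.1 hA (by omega) (by omega))
          subst this
          omega
        simp [he]

/-! ### The renewal identity -/

lemma eq_of_mem_winsAt {A B C D : List Bool} (hC : C = A ∨ C = B) (hD : D = A ∨ D = B)
    {ξ : ℕ → Bool} {s t : ℕ} (hs : ξ ∈ winsAt A B C s) (ht : ξ ∈ winsAt A B D t) : s = t := by
  rcases lt_trichotomy s t with h | h | h
  · rcases hC with rfl | rfl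
    · exact absurd hs.1 (ht.2 s h).1
    · exact absurd hs.1 (ht.2 s h).2
  · exact h
  · rcases hD with rfl | rfl
    · exact absurd ht.1 (hs.2 t h).1
    · exact absurd ht.1 (hs.2 t h).2

lemma measurableSet_spellsAfter (w : List Bool) (n : ℕ) : MeasurableSet (spellsAfter w n) := by
  have h : DeterminedBy (n + w.length) (spellsAfter w n) := fun ξ ξ' h hm k hk => by
    rw [← h (n + k) (by omega), hm k hk]
  exact h.measurableSet

/-- If the game is not over at time `n` and the next tosses spell `A`, then it ends with one of the
tosses `n + 1, …, n + |A|`. -/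
lemma noneUpTo_inter_spellsAfter (A B : List Bool) (n : ℕ) :
    noneUpTo A B n ∩ spellsAfter A n =
      ⋃ k ∈ Finset.Icc 1 A.length,
        (winsAt A B A (n + k) ∩ spellsAfter A n ∪ winsAt A B B (n + k) ∩ spellsAfter A n) := by
  classical
  ext ξ
  simp only [Set.mem_inter_iff, Set.mem_iUnion, Set.mem_union, Finset.mem_Icc, exists_prop]
  constructor
  · rintro ⟨hN, hA⟩
    have hex : ∃ t, occursAt A ξ t ∨ occursAt B ξ t :=
      ⟨_, Or.inl (occursAt_of_spellsAfter hA)⟩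
    have hmin : ∀ s < Nat.find hex, ¬ occursAt A ξ s ∧ ¬ occursAt B ξ s :=
      fun s hs => not_or.1 (Nat.find_min hex hs)
    have hle : Nat.find hex ≤ n + A.length :=
      Nat.find_min' hex (Or.inl (occursAt_of_spellsAfter hA))
    have hlt : n < Nat.find hex := by
      by_contra hcon
      rcases Nat.find_spec hex with h | h
      · exact (hN _ (by omega)).1 h
      · exact (hN _ (by omega)).2 h
    have hspec := Nat.find_spec hex
    obtain ⟨k, hk⟩ := Nat.exists_eq_add_of_le hlt.le
    rw [hk] at hle hlt hspec hmin
    refine ⟨k, ⟨by omega, by omega⟩, ?_⟩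
    rcases hspec with h | h
    · exact Or.inl ⟨⟨h, hmin⟩, hA⟩
    · exact Or.inr ⟨⟨h, hmin⟩, hA⟩
  · rintro ⟨k, hk, ⟨hw, hA⟩ | ⟨hw, hA⟩⟩
    · exact ⟨fun s hs => hw.2 s (by omega), hA⟩
    · exact ⟨fun s hs => hw.2 s (by omega), hA⟩

/-- The renewal identity: `P(τ > n)` as a combination of the probabilities that a player wins at
time `n + k`, with the summands of the Conway numbers as coefficients. -/
lemma measureReal_noneUpTo {p : ℝ} (hp0 : 0 < p) (hp1 : p < 1)
    {μ : Measure (ℕ → Bool)} [IsProbabilityMeasure μ] (hμ : IsCoinMeasure p μ)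
    {A B : List Bool} (hAB : ¬ A <:+: B) (hBA : ¬ B <:+: A) (n : ℕ) :
    μ.real (noneUpTo A B n) =
      (∑ k ∈ Finset.Icc 1 (min A.length A.length),
        (if A.take k = A.drop (A.length - k) then (1 : ℝ) else 0) / strP p (A.take k)
          * μ.real (winsAt A B A (n + k))) +
      ∑ k ∈ Finset.Icc 1 (min A.length B.length),
        (if A.take k = B.drop (B.length - k) then (1 : ℝ) else 0) / strP p (A.take k)
          * μ.real (winsAt A B B (n + k)) := by
  have hm : ∀ C k, MeasurableSet (winsAt A B C (n + k) ∩ spellsAfter A n) := fun C k =>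
    (determinedBy_winsAt A B C (n + k)).measurableSet.inter (measurableSet_spellsAfter A n)
  have key := measureReal_inter_spellsAfter hp0 hp1 hμ A (determinedBy_noneUpTo A B n)
  rw [noneUpTo_inter_spellsAfter, measureReal_biUnion_finset] at key
  · have hu : ∀ k ∈ Finset.Icc 1 A.length,
        μ.real (winsAt A B A (n + k) ∩ spellsAfter A n ∪ winsAt A B B (n + k) ∩ spellsAfter A n)
          = μ.real (winsAt A B A (n + k) ∩ spellsAfter A n)
            + μ.real (winsAt A B B (n + k) ∩ spellsAfter A n) := by
      intro k _
      refine measureReal_union ?_ (hm _ _)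
      rw [Set.disjoint_left]
      exact fun ξ h1 h2 => not_occursAt_both hAB hBA h1.1.1 h2.1.1
    rw [Finset.sum_congr rfl hu, Finset.sum_add_distrib,
      sum_measureReal_winsAt_inter hp0 hp1 hμ A B A A (fun _ => rfl),
      sum_measureReal_winsAt_inter hp0 hp1 hμ A B B A (fun h => absurd h hBA), ← add_mul] at key
    exact (mul_right_cancel₀ (strP_pos hp0 hp1 A).ne' key).symm
  · intro i _ j _ hij
    rw [Function.onFun, Set.disjoint_left]
    intro ξ h1 h2
    apply hij
    rcases h1 with h1 | h1 <;> rcases h2 with h2 | h2 <;>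
      · have := eq_of_mem_winsAt (by simp) (by simp) h1.1 h2.1
        omega
  · exact fun k _ => (hm _ _).union (hm _ _)

/-! ### Summation over time -/

/-- `C` cannot win before time `|C|`, so a shift by `k ≤ |C|` loses no summand. -/
lemma hasSum_winsAt {μ : Measure (ℕ → Bool)} [IsProbabilityMeasure μ]
    {A B C : List Bool} (hC : C = A ∨ C = B) {k : ℕ} (hk : k ≤ C.length) :
    HasSum (fun n => μ.real (winsAt A B C (n + k))) (μ.real (⋃ t, winsAt A B C t)) := by
  have h0 : (⋃ t, winsAt A B C t) = ⋃ n, winsAt A B C (n + k) := by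
    ext ξ
    simp only [Set.mem_iUnion]
    constructor
    · rintro ⟨t, ht⟩
      have := ht.1.1
      exact ⟨t - k, by rwa [Nat.sub_add_cancel (by omega)]⟩
    · rintro ⟨n, hn⟩
      exact ⟨_, hn⟩
  have hd : Pairwise (Function.onFun Disjoint fun n => winsAt A B C (n + k)) := by
    intro i j hij
    rw [Function.onFun, Set.disjoint_left]
    intro ξ h1 h2
    have := eq_of_mem_winsAt hC hC h1 h2
    omega
  have hme : ∀ n, MeasurableSet (winsAt A B C (n + k)) :=
    fun n => (determinedBy_winsAt A B C (n + k)).measurableSet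
  have hs := measure_iUnion (μ := μ) hd hme
  rw [h0, measureReal_def, hs]
  exact (ENNReal.summable_toReal (hs ▸ measure_ne_top μ _)).hasSum_iff.2
    (ENNReal.tsum_toReal_eq fun n => measure_ne_top μ _).symm

lemma hasSum_conway (p : ℝ) {μ : Measure (ℕ → Bool)} [IsProbabilityMeasure μ]
    (D : List Bool) {A B C : List Bool} (hC : C = A ∨ C = B) :
    HasSum (fun n => ∑ k ∈ Finset.Icc 1 (min D.length C.length),
        (if D.take k = C.drop (C.length - k) then (1 : ℝ) else 0) / strP p (D.take k)
          * μ.real (winsAt A B C (n + k)))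
      (conway p C D * μ.real (⋃ t, winsAt A B C t)) := by
  rw [conway, Finset.sum_mul]
  refine hasSum_sum fun k hk => HasSum.mul_left _ (hasSum_winsAt hC ?_)
  simp only [Finset.mem_Icc, le_min_iff] at hk
  exact hk.2.2

/-- `Σ_n P(τ > n) = p_A (A ∗ A) + p_B (B ∗ A)`. -/
lemma hasSum_noneUpTo {p : ℝ} (hp0 : 0 < p) (hp1 : p < 1)
    {μ : Measure (ℕ → Bool)} [IsProbabilityMeasure μ] (hμ : IsCoinMeasure p μ)
    {A B : List Bool} (hAB : ¬ A <:+: B) (hBA : ¬ B <:+: A) :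
    HasSum (fun n => μ.real (noneUpTo A B n))
      (conway p A A * μ.real (⋃ t, winsAt A B A t)
        + conway p B A * μ.real (⋃ t, winsAt A B B t)) := by
  simp only [measureReal_noneUpTo hp0 hp1 hμ hAB hBA]
  exact (hasSum_conway p A (Or.inl rfl)).add (hasSum_conway p A (Or.inr rfl))

lemma noneUpTo_comm (A B : List Bool) (n : ℕ) : noneUpTo A B n = noneUpTo B A n := by
  ext ξ; simp only [noneUpTo, and_comm]

lemma winsAt_comm (A B C : List Bool) (t : ℕ) : winsAt A B C t = winsAt B A C t := by
  ext ξ; simp only [winsAt, and_comm]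

/-! ### Winning in terms of hitting times -/

lemma le_hitTime_iff {A : List Bool} {ξ : ℕ → Bool} {t : ℕ} :
    (t : ℕ∞) ≤ hitTime A ξ ↔ ∀ s < t, ¬ occursAt A ξ s := by
  simp only [hitTime, le_iInf_iff, Nat.cast_le]
  exact ⟨fun h s hs ho => absurd (h s ho) (by omega),
    fun h s ho => not_lt.1 fun hs => h s hs ho⟩

lemma exists_of_hitTime_ne_top {A : List Bool} {ξ : ℕ → Bool} (h : hitTime A ξ ≠ ⊤) :
    ∃ t : ℕ, hitTime A ξ = t ∧ occursAt A ξ t := by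
  classical
  have hex : ∃ t, occursAt A ξ t := by
    by_contra hcon
    push Not at hcon
    exact h (by simp [hitTime, hcon])
  refine ⟨Nat.find hex, le_antisymm (iInf₂_le _ (Nat.find_spec hex)) ?_, Nat.find_spec hex⟩
  exact le_hitTime_iff.2 fun s hs => Nat.find_min hex hs

lemma setOf_win_eq (A B : List Bool) :
    {ξ | min (hitTime A ξ) (hitTime B ξ) = hitTime A ξ ∧
      min (hitTime A ξ) (hitTime B ξ) ≠ ⊤} = ⋃ t, winsAt A B A t := by
  ext ξ
  simp only [Set.mem_ofPred_eq, Set.mem_iUnion]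
  constructor
  · rintro ⟨h1, h2⟩
    rw [h1] at h2
    obtain ⟨t, ht, ho⟩ := exists_of_hitTime_ne_top h2
    refine ⟨t, ho, fun s hs => ⟨le_hitTime_iff.1 ht.ge s hs, ?_⟩⟩
    exact le_hitTime_iff.1 (ht ▸ min_eq_left_iff.1 h1) s hs
  · rintro ⟨t, ho, hn⟩
    have hA : hitTime A ξ = t :=
      le_antisymm (iInf₂_le _ ho) (le_hitTime_iff.2 fun s hs => (hn s hs).1)
    have hB : (t : ℕ∞) ≤ hitTime B ξ := le_hitTime_iff.2 fun s hs => (hn s hs).2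
    rw [hA, min_eq_left hB]
    exact ⟨rfl, ENat.natCast_ne_top t⟩

/-- **Conway's formula, two players.** For `m = 2`, the winning
probabilities `p_{A_i} = μ(τ = τ_{A_i} < ∞)` (with `τ = min(τ_{A_1}, τ_{A_2})`)
satisfy `p_{A_1} ⬝ ((A_1 ∗ A_1) − (A_1 ∗ A_2)) = p_{A_2} ⬝ ((A_2 ∗ A_2) − (A_2 ∗ A_1))`;
i.e., the odds of the first player against the second are
`p_{A_1}/p_{A_2} = ((A_2 ∗ A_2) − (A_2 ∗ A_1)) / ((A_1 ∗ A_1) − (A_1 ∗ A_2))`. -/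
theorem conway_two_players (p : ℝ) (hp0 : 0 < p) (hp1 : p < 1)
    (μ : Measure (ℕ → Bool)) [IsProbabilityMeasure μ] (hμ : IsCoinMeasure p μ)
    (A₁ A₂ : List Bool) (h1 : 1 ≤ A₁.length) (h2 : 1 ≤ A₂.length)
    (h12 : ¬ A₁ <:+: A₂) (h21 : ¬ A₂ <:+: A₁) :
    (μ {ξ | min (hitTime A₁ ξ) (hitTime A₂ ξ) = hitTime A₁ ξ ∧
          min (hitTime A₁ ξ) (hitTime A₂ ξ) ≠ ⊤}).toReal *
        (conway p A₁ A₁ - conway p A₁ A₂) =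
      (μ {ξ | min (hitTime A₁ ξ) (hitTime A₂ ξ) = hitTime A₂ ξ ∧
          min (hitTime A₁ ξ) (hitTime A₂ ξ) ≠ ⊤}).toReal *
        (conway p A₂ A₂ - conway p A₂ A₁) ∧
    ((μ {ξ | min (hitTime A₁ ξ) (hitTime A₂ ξ) = hitTime A₂ ξ ∧
          min (hitTime A₁ ξ) (hitTime A₂ ξ) ≠ ⊤}).toReal ≠ 0 →
      conway p A₁ A₁ - conway p A₁ A₂ ≠ 0 →
      (μ {ξ | min (hitTime A₁ ξ) (hitTime A₂ ξ) = hitTime A₁ ξ ∧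
          min (hitTime A₁ ξ) (hitTime A₂ ξ) ≠ ⊤}).toReal /
        (μ {ξ | min (hitTime A₁ ξ) (hitTime A₂ ξ) = hitTime A₂ ξ ∧
          min (hitTime A₁ ξ) (hitTime A₂ ξ) ≠ ⊤}).toReal =
      (conway p A₂ A₂ - conway p A₂ A₁) /
        (conway p A₁ A₁ - conway p A₁ A₂)) := by
  have hw1 := setOf_win_eq A₁ A₂
  have hw2 : {ξ | min (hitTime A₁ ξ) (hitTime A₂ ξ) = hitTime A₂ ξ ∧
      min (hitTime A₁ ξ) (hitTime A₂ ξ) ≠ ⊤} = ⋃ t, winsAt A₁ A₂ A₂ t := by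
    simp only [min_comm (hitTime A₁ _), winsAt_comm A₁ A₂]
    exact setOf_win_eq A₂ A₁
  rw [hw1, hw2]
  have s1 := hasSum_noneUpTo hp0 hp1 hμ h12 h21
  have s2 := hasSum_noneUpTo hp0 hp1 hμ h21 h12
  simp only [noneUpTo_comm A₂ A₁, winsAt_comm A₂ A₁] at s2
  have e := s1.unique s2
  simp only [measureReal_def] at e
  have main : (μ (⋃ t, winsAt A₁ A₂ A₁ t)).toReal * (conway p A₁ A₁ - conway p A₁ A₂) =
      (μ (⋃ t, winsAt A₁ A₂ A₂ t)).toReal * (conway p A₂ A₂ - conway p A₂ A₁) := by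
    linarith
  refine ⟨main, fun hne hc => ?_⟩
  rw [div_eq_div_iff hne hc, main, mul_comm]
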